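/- Let μ be an l-regular partition which is edge l-disconnected. Then there exists a co-suitable node R of μ such that the partition μ_R (obtained by removing R) is l-regular and ℓ(Mull(μ)) = ℓ(Mull(μ_R)). -/

import Mathlib

noncomputable section

/-- `p : ℕ → ℕ` represents the partition `λ` with `p i = λ_{i+1}` (0-indexed parts):
a weakly decreasing, eventually zero sequence. -/
def IsPartition (p : ℕ → ℕ) : Prop :=
  (∀ i j, i ≤ j → p j ≤ p i) ∧ ∃ N, ∀ i, N ≤ i → p i = 0

/-- `ℓ(λ)`, the number of nonzero parts. -/
def plen (p : ℕ → ℕ) : ℕ := sInf {N | p N = 0}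

/-- the degree (number of boxes) of the partition. -/
def pdeg (p : ℕ → ℕ) : ℕ := ∑ i ∈ Finset.range (plen p), p i

/-- `λ` is `l`-regular: no `l` consecutive parts are equal and nonzero. -/
def IsLRegular (l : ℕ) (p : ℕ → ℕ) : Prop :=
  ∀ i, p i ≠ 0 → p (i + l - 1) ≠ p i

/-- `λ` is `l`-restricted: `λ_i - λ_{i+1} < l` for all `i`. -/
def IsLRestricted (l : ℕ) (p : ℕ → ℕ) : Prop :=
  ∀ i, p i - p (i + 1) < l

/-- the transpose (conjugate) partition. -/
def conjP (p : ℕ → ℕ) : ℕ → ℕ :=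
  fun j => ((Finset.range (plen p)).filter fun i => j < p i).card

/-- the minimal `h ≥ 1` with `λ_1 - λ_{h+1} + h ≥ l`: when `e(λ) > l`, the first
`l`-segment of the `l`-edge lies in rows `1, …, h`. -/
def firstSeg (l : ℕ) (p : ℕ → ℕ) : ℕ := sInf {h | 1 ≤ h ∧ l ≤ p 0 - p h + h}

/-- removal of the `l`-edge (with fuel): if `e(λ) ≤ l` the whole edge is removed,
otherwise the first `l`-segment is removed from rows `1, …, h` (`h = firstSeg`) and one
recurses on `(λ_{h+1}, λ_{h+2}, …)`. -/
def removeLEdgeAux (l : ℕ) : ℕ → (ℕ → ℕ) → ℕ → ℕ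
  | 0, _ => fun _ => 0
  | n + 1, p =>
    if p 0 = 0 then fun _ => 0
    else if p 0 + plen p - 1 ≤ l then fun i => p (i + 1) - 1
    else fun i =>
      if i + 1 < firstSeg l p then p (i + 1) - 1
      else if i + 1 = firstSeg l p then p 0 + firstSeg l p - 1 - l
      else removeLEdgeAux l n (fun j => p (j + firstSeg l p)) (i - firstSeg l p)

/-- the partition obtained by removing the `l`-edge of `λ`. -/
def removeLEdge (l : ℕ) (p : ℕ → ℕ) : ℕ → ℕ := removeLEdgeAux l (plen p) p

/-- `e_l(λ)`, the number of nodes of the `l`-edge. -/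
def elen (l : ℕ) (p : ℕ → ℕ) : ℕ := pdeg p - pdeg (removeLEdge l p)

/-- the length of `Mull(λ)` prescribed by the defining recursion of the Mullineux map. -/
def mullLen (l : ℕ) (p : ℕ → ℕ) : ℕ :=
  if l ∣ elen l p then elen l p - plen p else elen l p - plen p + 1

/-- the Mullineux map (with fuel): `Mull(0) = 0` and, for `λ ≠ 0` `l`-regular with `ν`
obtained from `λ` by removing the `l`-edge, `Mull(λ)` is the unique `l`-regular partition
whose `l`-edge removal leaves `Mull(ν)` and whose length is `e_l(λ) - ℓ(λ)` if
`l ∣ e_l(λ)` and `e_l(λ) - ℓ(λ) + 1` otherwise. -/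
def mullAux (l : ℕ) : ℕ → (ℕ → ℕ) → ℕ → ℕ
  | 0, _ => fun _ => 0
  | n + 1, p =>
    if p 0 = 0 then fun _ => 0
    else
      Classical.epsilon fun μ : ℕ → ℕ =>
        IsPartition μ ∧ IsLRegular l μ ∧
          removeLEdge l μ = mullAux l n (removeLEdge l p) ∧ plen μ = mullLen l p

/-- the Mullineux map. -/
def mull (l : ℕ) (p : ℕ → ℕ) : ℕ → ℕ := mullAux l (pdeg p) p

/-- the list of Mullineux components (with fuel). -/
def mullCompsAux (l : ℕ) : ℕ → (ℕ → ℕ) → List (ℕ → ℕ)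
  | 0, _ => []
  | n + 1, p =>
    if p 0 = 0 then []
    else if elen l p ≤ l then [p]
    else (fun i => if i < firstSeg l p then p i else 0) ::
      mullCompsAux l n (fun j => p (j + firstSeg l p))

/-- the Mullineux components of `λ`. -/
def mullComps (l : ℕ) (p : ℕ → ℕ) : List (ℕ → ℕ) := mullCompsAux l (plen p) p

/-- edge `l`-connectedness (with fuel): consecutive Mullineux components `α, ρ` satisfy
`α_1 - ρ_1 + ℓ(α) = l`. -/
def edgeConnAux (l : ℕ) : ℕ → (ℕ → ℕ) → Prop
  | 0, _ => True
  | n + 1, p =>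
    if elen l p ≤ l then True
    else p 0 + firstSeg l p = l + p (firstSeg l p) ∧
      edgeConnAux l n fun j => p (j + firstSeg l p)

/-- `λ` is edge `l`-connected. -/
def EdgeLConnected (l : ℕ) (p : ℕ → ℕ) : Prop := edgeConnAux l (plen p) p

/-- the node `(i+1, λ_{i+1})` (in row `i+1`, 1-indexed) is a removable node. -/
def Removable (p : ℕ → ℕ) (i : ℕ) : Prop := p (i + 1) < p i

/-- removal of the removable node in row `i+1`. -/
def removeNode (p : ℕ → ℕ) (i : ℕ) : ℕ → ℕ := fun k => if k = i then p i - 1 else p k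

/-- there is an addable node `(i+1, λ_{i+1} + 1)` in row `i+1` (1-indexed). -/
def Addable (p : ℕ → ℕ) (i : ℕ) : Prop := i ≤ plen p ∧ (i = 0 ∨ p i < p (i - 1))

/-- the removable node in row `i+1` is suitable: its residue (mod `l`) differs from the
residue of every lower addable node. -/
def Suitable (l : ℕ) (p : ℕ → ℕ) (i : ℕ) : Prop :=
  Removable p i ∧ ∀ j, i < j → Addable p j →
    ¬ ((p j : ℤ) - (j : ℤ) ≡ (p i : ℤ) - (i : ℤ) - 1 [ZMOD (l : ℤ)])

/-- the removable node in row `i+1` is co-suitable: its transpose node is a suitable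
node of the transpose partition. -/
def CoSuitable (l : ℕ) (p : ℕ → ℕ) (i : ℕ) : Prop :=
  Removable p i ∧ Suitable l (conjP p) (p i - 1)

/-- `Φ_m`: partitions with at most `m` parts and `λ_1 - λ_m ≤ l - m`. -/
def Phi (l m : ℕ) : Set (ℕ → ℕ) :=
  {p | IsPartition p ∧ plen p ≤ m ∧ p 0 - p (m - 1) ≤ l - m}

/-- `λ` is `m`-distinguished: `λ = λ⁰ + lλ̄` with
`λ⁰ = ((l-m)^k, a_1, …, a_m)`, `l - m > a_1 ≥ … ≥ a_m ≥ 0`, and `λ̄` a partition with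
`λ̄_1 ≤ m - 1`. -/
def IsDistinguished (l m : ℕ) (p : ℕ → ℕ) : Prop :=
  ∃ (k : ℕ) (a : ℕ → ℕ) (pb : ℕ → ℕ),
    IsPartition pb ∧ pb 0 < m ∧
    (∀ i j, i ≤ j → a j ≤ a i) ∧ a 0 < l - m ∧ (∀ i, m ≤ i → a i = 0) ∧
    ∀ i, p i = (if i < k then l - m else a (i - k)) + l * pb i

/-- `q` is obtained from `p` by removing a skew `l`-hook (spanning rows `a+1, …, b+1`,
1-indexed). -/
def IsHookRemoval (l : ℕ) (p q : ℕ → ℕ) : Prop :=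
  IsPartition q ∧ ∃ a b : ℕ, a ≤ b ∧
    (∀ i, i < a → q i = p i) ∧
    (∀ i, a ≤ i → i < b → q i + 1 = p (i + 1)) ∧
    q b + l = p a + (b - a) ∧
    ∀ i, b < i → q i = p i

/-- `q` is the `l`-core of `p`: obtained by repeatedly removing skew `l`-hooks until
none remain. -/
def IsCoreOf (l : ℕ) (p q : ℕ → ℕ) : Prop :=
  Relation.ReflTransGen (fun x y => IsHookRemoval l x y) p q ∧ ∀ r, ¬ IsHookRemoval l q r

/-- the `l`-core of `p`. -/
def lCore (l : ℕ) (p : ℕ → ℕ) : ℕ → ℕ := Classical.epsilon (IsCoreOf l p)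


/-! ### Basic facts -/

lemma plen_spec {p : ℕ → ℕ} (hp : IsPartition p) (i : ℕ) : p i = 0 ↔ plen p ≤ i := by
  obtain ⟨hm, N, hN⟩ := hp
  have hne : {N | p N = 0}.Nonempty := ⟨N, hN N le_rfl⟩
  constructor
  · intro h
    exact Nat.sInf_le h
  · intro h
    have h1 : p (plen p) = 0 := Nat.sInf_mem hne
    have := hm _ _ h
    omega

lemma part_shift {p : ℕ → ℕ} (hp : IsPartition p) (c : ℕ) : IsPartition (fun j => p (j + c)) := by
  obtain ⟨hm, N, hN⟩ := hp
  exact ⟨fun i j h => hm _ _ (by omega), N, fun i hi => hN _ (by omega)⟩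

lemma reg_shift {l : ℕ} (hl : 2 ≤ l) {p : ℕ → ℕ} (hp : IsLRegular l p) (c : ℕ) :
    IsLRegular l (fun j => p (j + c)) := by
  intro i hi
  have := hp (i + c) hi
  have e : i + c + l - 1 = i + l - 1 + c := by omega
  rw [e] at this
  exact this

lemma plen_eq {p : ℕ → ℕ} (hp : IsPartition p) (n : ℕ) (h1 : p n = 0)
    (h2 : ∀ i, i < n → p i ≠ 0) : plen p = n := by
  have a := (plen_spec hp n).1 h1
  by_contra h
  have := h2 (plen p) (by omega)
  exact this ((plen_spec hp _).2 le_rfl)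

lemma plen_shift {p : ℕ → ℕ} (hp : IsPartition p) (c : ℕ) :
    plen (fun j => p (j + c)) = plen p - c := by
  apply plen_eq (part_shift hp c)
  · rw [plen_spec hp]; omega
  · intro i hi h
    rw [plen_spec hp] at h; omega

lemma firstSeg_spec {l : ℕ} (hl : 2 ≤ l) {p : ℕ → ℕ} (hp : IsPartition p) :
    1 ≤ firstSeg l p ∧ firstSeg l p ≤ l ∧ l + p (firstSeg l p) ≤ p 0 + firstSeg l p ∧
      ∀ g, g < firstSeg l p → p 0 + g < l + p g := by
  have hmem : l ∈ {h | 1 ≤ h ∧ l ≤ p 0 - p h + h} := ⟨by omega, by omega⟩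
  have h1 : firstSeg l p ∈ {h | 1 ≤ h ∧ l ≤ p 0 - p h + h} := Nat.sInf_mem ⟨l, hmem⟩
  obtain ⟨a, b⟩ := h1
  have c := hp.1 0 (firstSeg l p) (by omega)
  refine ⟨a, Nat.sInf_le hmem, by omega, ?_⟩
  intro g hg
  by_contra h
  rcases Nat.eq_zero_or_pos g with rfl | hg0
  · omega
  have := hp.1 0 g (by omega)
  have : firstSeg l p ≤ g := Nat.sInf_le ⟨hg0, by omega⟩
  omega

lemma firstSeg_eq {l : ℕ} (hl : 2 ≤ l) {p : ℕ → ℕ} (hp : IsPartition p) (h : ℕ)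
    (h1 : l + p h ≤ p 0 + h) (h2 : ∀ g, g < h → p 0 + g < l + p g) : firstSeg l p = h := by
  obtain ⟨a, b, c, d⟩ := firstSeg_spec hl hp
  rcases lt_trichotomy (firstSeg l p) h with h' | h' | h'
  · have := h2 _ h'; omega
  · exact h'
  · have := d _ h'; omega

lemma aux_zero (l n : ℕ) (p : ℕ → ℕ) (h : p 0 = 0) : removeLEdgeAux l n p = fun _ => 0 := by
  cases n <;> simp [removeLEdgeAux, h]

lemma aux_fuel {l : ℕ} (hl : 2 ≤ l) (n : ℕ) : ∀ (m : ℕ) (p : ℕ → ℕ), IsPartition p →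
    plen p ≤ n → plen p ≤ m → removeLEdgeAux l n p = removeLEdgeAux l m p := by
  induction n with
  | zero =>
    intro m p hp h1 _
    have : p 0 = 0 := (plen_spec hp 0).2 h1
    rw [aux_zero _ _ _ this, aux_zero _ _ _ this]
  | succ n ih =>
    intro m p hp h1 h2
    by_cases h0 : p 0 = 0
    · rw [aux_zero _ _ _ h0, aux_zero _ _ _ h0]
    cases m with
    | zero => exact absurd ((plen_spec hp 0).2 h2) h0
    | succ m =>
      have hs := firstSeg_spec hl hp
      have hq := ih m _ (part_shift hp (firstSeg l p))
        (by rw [plen_shift hp]; omega) (by rw [plen_shift hp]; omega)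
      simp only [removeLEdgeAux, hq]

/-- uniform recursion for the edge removal -/
lemma rem_rec {l : ℕ} (hl : 2 ≤ l) {p : ℕ → ℕ} (hp : IsPartition p) (i : ℕ) :
    removeLEdge l p i = if i + 1 < firstSeg l p then p (i + 1) - 1
      else if i + 1 = firstSeg l p then p 0 + firstSeg l p - 1 - l
      else removeLEdge l (fun j => p (j + firstSeg l p)) (i - firstSeg l p) := by
  obtain ⟨a, b, c, d⟩ := firstSeg_spec hl hp
  by_cases h0 : p 0 = 0
  · have hz : ∀ i, p i = 0 := fun i => by have := hp.1 0 i (by omega); omega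
    unfold removeLEdge
    rw [aux_zero _ _ _ h0, aux_zero _ _ (fun j => p (j + firstSeg l p)) (hz _)]
    simp only [hz]
    split_ifs <;> omega
  · have hr : plen p ≠ 0 := fun h => h0 ((plen_spec hp 0).2 (by omega))
    obtain ⟨n, hn⟩ := Nat.exists_eq_succ_of_ne_zero hr
    have hu : removeLEdge l p = removeLEdgeAux l (n+1) p := by rw [removeLEdge, hn]
    rw [hu]
    have ht : removeLEdge l (fun j => p (j + firstSeg l p)) =
        removeLEdgeAux l n (fun j => p (j + firstSeg l p)) :=
      aux_fuel hl _ _ _ (part_shift hp _) le_rfl (by rw [plen_shift hp]; omega)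
    rw [ht]
    by_cases he : p 0 + plen p - 1 ≤ l
    · have hrh : plen p ≤ firstSeg l p := by
        by_contra h
        have h1 : p (firstSeg l p) ≠ 0 := by
          rw [Ne, plen_spec hp]; omega
        have := d (plen p - 1)
        omega
      have hp0 : ∀ i, firstSeg l p ≤ i → p i = 0 := fun i hi => (plen_spec hp i).2 (by omega)
      have hfh : p 0 + firstSeg l p ≤ l + 1 := by
        have h1 : firstSeg l p = plen p ∨ plen p < firstSeg l p := by omega
        rcases h1 with h1 | h1
        · omega
        · have h2 := d (firstSeg l p - 1) (by omega)
          rw [(plen_spec hp (firstSeg l p - 1)).2 (by omega)] at h2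
          omega
      rw [aux_zero l n (fun j => p (j + firstSeg l p)) (hp0 _ (by omega))]
      simp only [removeLEdgeAux, h0, he, if_true, if_false]
      split_ifs with h1 h2
      · rfl
      · rw [hp0 _ (by omega)]; omega
      · rw [hp0 _ (by omega)]
    · simp only [removeLEdgeAux, h0, he, if_false]

lemma rem_lt {l : ℕ} (hl : 2 ≤ l) {p : ℕ → ℕ} (hp : IsPartition p) (i : ℕ)
    (h : i + 1 < firstSeg l p) : removeLEdge l p i = p (i + 1) - 1 := by
  rw [rem_rec hl hp, if_pos h]

lemma rem_eq {l : ℕ} (hl : 2 ≤ l) {p : ℕ → ℕ} (hp : IsPartition p) (i : ℕ)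
    (h : i + 1 = firstSeg l p) : removeLEdge l p i = p 0 + i - l := by
  rw [rem_rec hl hp, if_neg (by omega), if_pos h]; omega

lemma rem_add {l : ℕ} (hl : 2 ≤ l) {p : ℕ → ℕ} (hp : IsPartition p) (i : ℕ) :
    removeLEdge l p (i + firstSeg l p) =
      removeLEdge l (fun j => p (j + firstSeg l p)) i := by
  rw [rem_rec hl hp, if_neg (by omega), if_neg (by omega)]; simp

lemma rem_zero_le {l : ℕ} (hl : 2 ≤ l) {p : ℕ → ℕ} (hp : IsPartition p) :
    removeLEdge l p 0 ≤ p 0 - 1 := by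
  have hs := firstSeg_spec hl hp
  by_cases h : 1 < firstSeg l p
  · rw [rem_lt hl hp 0 h]
    have := hp.1 0 1 (by omega)
    simp only [zero_add]; omega
  · rw [rem_eq hl hp 0 (by omega)]; omega

lemma rem_anti {l : ℕ} (hl : 2 ≤ l) (i : ℕ) : ∀ {p : ℕ → ℕ}, IsPartition p →
    removeLEdge l p (i + 1) ≤ removeLEdge l p i ∧ removeLEdge l p i ≤ p i := by
  induction i using Nat.strong_induction_on with
  | _ i ih =>
  intro p hp
  obtain ⟨a, b, c, d⟩ := firstSeg_spec hl hp
  by_cases h : firstSeg l p ≤ i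
  · have := ih (i - firstSeg l p) (by omega) (part_shift hp (firstSeg l p))
    rw [← rem_add hl hp, ← rem_add hl hp] at this
    have e1 : i - firstSeg l p + 1 + firstSeg l p = i + 1 := by omega
    have e2 : i - firstSeg l p + firstSeg l p = i := by omega
    rw [e1, e2] at this
    exact this
  · by_cases h1 : i + 1 = firstSeg l p
    · rw [rem_eq hl hp i h1]
      have h2 := rem_add hl hp 0
      have h3 := rem_zero_le hl (part_shift hp (firstSeg l p))
      simp only [zero_add] at h2 h3
      rw [← h1] at h2 h3 c
      have h4 := d i (by omega)
      constructor
      · rw [h2]; omega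
      · omega
    · rw [rem_lt hl hp i (by omega)]
      have h5 := hp.1 i (i+1) (by omega)
      refine ⟨?_, by omega⟩
      by_cases h2 : i + 2 = firstSeg l p
      · rw [rem_eq hl hp (i+1) h2]
        have := d (i+1) (by omega)
        omega
      · rw [rem_lt hl hp (i+1) (by omega)]
        have := hp.1 (i+1) (i+1+1) (by omega)
        omega

lemma rem_part {l : ℕ} (hl : 2 ≤ l) {p : ℕ → ℕ} (hp : IsPartition p) :
    IsPartition (removeLEdge l p) := by
  constructor
  · exact antitone_nat_of_succ_le (fun n => (rem_anti hl n hp).1)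
  · obtain ⟨N, hN⟩ := hp.2
    refine ⟨N, fun i hi => ?_⟩
    have := (rem_anti hl i hp).2
    have := hN i hi
    omega

lemma rem_reg {l : ℕ} (hl : 2 ≤ l) (i : ℕ) : ∀ {p : ℕ → ℕ}, IsPartition p → IsLRegular l p →
    removeLEdge l p i ≠ 0 → removeLEdge l p (i + l - 1) ≠ removeLEdge l p i := by
  induction i using Nat.strong_induction_on with
  | _ i ih =>
  intro p hp hr hne heq
  obtain ⟨a, b, c, d⟩ := firstSeg_spec hl hp
  by_cases h : firstSeg l p ≤ i
  · have := ih (i - firstSeg l p) (by omega) (part_shift hp (firstSeg l p)) (reg_shift hl hr _)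
    rw [← rem_add hl hp, ← rem_add hl hp] at this
    have e1 : i - firstSeg l p + l - 1 + firstSeg l p = i + l - 1 := by omega
    have e2 : i - firstSeg l p + firstSeg l p = i := by omega
    rw [e1, e2] at this
    exact this hne heq
  have hv := rem_part hl hp
  have hconst : ∀ j, i ≤ j → j ≤ i + l - 1 → removeLEdge l p j = removeLEdge l p i := by
    intro j h1 h2
    have := hv.1 _ _ h1
    have := hv.1 _ _ h2
    omega
  set v := removeLEdge l p i with hvdef
  by_cases h1 : i + l - 1 < firstSeg l p
  · have hi : i = 0 := by omega
    have hf : firstSeg l p = l := by omega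
    subst hi
    have h2 := rem_eq hl hp (l - 1) (by omega)
    rw [hconst _ (by omega) (by omega)] at h2
    have h3 := rem_lt hl hp (l - 2) (by omega)
    rw [hconst _ (by omega) (by omega)] at h3
    have e : l - 2 + 1 = 0 + l - 1 := by omega
    rw [e] at h3
    have := hr 0 (by omega)
    have := hp.1 0 (0 + l - 1) (by omega)
    omega
  · have hpt := part_shift hp (firstSeg l p)
    obtain ⟨a2, b2, c2, d2⟩ := firstSeg_spec hl hpt
    set h2 := firstSeg l (fun j => p (j + firstSeg l p)) with hh2
    have k1 := rem_eq hl hp (firstSeg l p - 1) (by omega)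
    rw [hconst _ (by omega) (by omega)] at k1
    -- second component has firstSeg at least two
    have hrow : ∀ j, j + firstSeg l p ≤ i + l - 1 →
        removeLEdge l (fun j => p (j + firstSeg l p)) j = v := by
      intro j hj
      rw [← rem_add hl hp, hconst _ (by omega) hj]
    have k2 : h2 ≠ 1 := by
      intro hh
      have := rem_eq hl hpt 0 (by omega)
      rw [hrow 0 (by omega)] at this
      simp only [zero_add] at this
      omega
    have k3 := rem_lt hl hpt 0 (by omega)
    rw [hrow 0 (by omega)] at k3
    simp only [zero_add] at k3
    have k4 := hp.1 (firstSeg l p) (1 + firstSeg l p) (by omega)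
    have k5 : p (firstSeg l p) = v + 1 := by omega
    have k6 : i + l - firstSeg l p < h2 := by
      by_contra hcon
      have := rem_eq hl hpt (h2 - 1) (by omega)
      rw [hrow _ (by omega)] at this
      simp only [zero_add] at this
      omega
    have k7 := rem_lt hl hpt (i + l - 1 - firstSeg l p) (by omega)
    rw [hrow _ (by omega)] at k7
    have e : i + l - 1 - firstSeg l p + 1 + firstSeg l p = i + 1 + l - 1 := by omega
    rw [e] at k7
    have k8 : p (i + 1) = v + 1 := by
      by_cases hc : i + 1 = firstSeg l p
      · rw [hc]; exact k5
      · have := rem_lt hl hp i (by omega)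
        rw [hconst _ (by omega) (by omega)] at this
        omega
    have := hr (i + 1) (by omega)
    omega

lemma pdeg_eq {p : ℕ → ℕ} (hp : IsPartition p) (N : ℕ) (hN : plen p ≤ N) :
    pdeg p = ∑ i ∈ Finset.range N, p i := by
  unfold pdeg
  apply Finset.sum_subset
  · intro x hx; simp at *; omega
  · intro x _ hx
    simp at hx
    exact (plen_spec hp x).2 hx

lemma sum_pred (p : ℕ → ℕ) (n : ℕ) (h : ∀ i, i < n → p (i + 1) ≠ 0) :
    ∑ i ∈ Finset.range n, (p (i + 1) - 1) + p 0 + n = ∑ i ∈ Finset.range (n + 1), p i := by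
  induction n with
  | zero => simp
  | succ n ih =>
    rw [Finset.sum_range_succ, Finset.sum_range_succ _ (n+1), ← ih (fun i hi => h i (by omega))]
    have := h n (by omega)
    omega

lemma elen_zero {l : ℕ} {p : ℕ → ℕ} (h : p 0 = 0) : elen l p = 0 := by
  have : plen p = 0 := by
    have : plen p ≤ 0 := Nat.sInf_le h
    omega
  simp [elen, pdeg, this]

lemma elen_small {l : ℕ} (hl : 2 ≤ l) {p : ℕ → ℕ} (hp : IsPartition p) (h0 : p 0 ≠ 0)
    (he : p 0 + plen p - 1 ≤ l) : elen l p = p 0 + plen p - 1 := by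
  have hr : plen p ≠ 0 := fun h => h0 ((plen_spec hp 0).2 (by omega))
  obtain ⟨n, hn⟩ := Nat.exists_eq_succ_of_ne_zero hr
  have hu : removeLEdge l p = fun i => p (i + 1) - 1 := by
    rw [removeLEdge, hn]; simp only [removeLEdgeAux, h0, he, if_true, if_false]
  have h1 : pdeg (removeLEdge l p) = ∑ i ∈ Finset.range n, removeLEdge l p i := by
    apply pdeg_eq (rem_part hl hp)
    rw [← plen_spec (rem_part hl hp), hu]
    have := (plen_spec hp (n+1)).2 (by omega)
    simp only; omega
  have h2 := sum_pred p n (fun i hi => by rw [Ne, plen_spec hp]; omega)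
  rw [hu] at h1
  unfold elen
  rw [hu, h1, pdeg_eq hp (n+1) (by omega)]
  beta_reduce
  omega

lemma elen_big {l : ℕ} (hl : 2 ≤ l) {p : ℕ → ℕ} (hp : IsPartition p) (h0 : p 0 ≠ 0)
    (he : l < p 0 + plen p - 1) :
    firstSeg l p ≤ plen p ∧
    elen l p = l + elen l (fun j => p (j + firstSeg l p)) := by
  obtain ⟨a, b, c, d⟩ := firstSeg_spec hl hp
  have hr : plen p ≠ 0 := fun h => h0 ((plen_spec hp 0).2 (by omega))
  have hh : firstSeg l p ≤ plen p := by
    by_contra h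
    have := d (plen p) (by omega)
    rw [(plen_spec hp _).2 le_rfl] at this
    omega
  refine ⟨hh, ?_⟩
  have hpt := part_shift hp (firstSeg l p)
  obtain ⟨n, hn⟩ := Nat.exists_eq_succ_of_ne_zero (show firstSeg l p ≠ 0 by omega)
  have s1 : pdeg p = ∑ i ∈ Finset.range (firstSeg l p), p i
      + pdeg (fun j => p (j + firstSeg l p)) := by
    rw [pdeg_eq hp (firstSeg l p + plen p) (by omega), Finset.sum_range_add,
      pdeg_eq hpt (plen p) (by rw [plen_shift hp]; omega)]
    congr 1
    exact Finset.sum_congr rfl (fun i _ => by simp [add_comm])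
  have hv := rem_part hl hp
  have hvt := rem_part hl hpt
  obtain ⟨M, hM⟩ : ∃ M, plen (removeLEdge l p) ≤ M ∧
      plen (removeLEdge l (fun j => p (j + firstSeg l p))) ≤ M := ⟨_, le_max_left _ _, le_max_right _ _⟩
  have s2 : pdeg (removeLEdge l p) = ∑ i ∈ Finset.range (firstSeg l p), removeLEdge l p i
      + pdeg (removeLEdge l (fun j => p (j + firstSeg l p))) := by
    rw [pdeg_eq hv (firstSeg l p + M) (by omega), Finset.sum_range_add,
      pdeg_eq hvt M hM.2]
    congr 1
    exact Finset.sum_congr rfl (fun i _ => by rw [add_comm, rem_add hl hp])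
  have s3 : ∑ i ∈ Finset.range (firstSeg l p), removeLEdge l p i + l =
      ∑ i ∈ Finset.range (firstSeg l p), p i := by
    rw [hn, ← Nat.add_one, ← sum_pred p n (fun i hi => by rw [Ne, plen_spec hp]; omega),
      Finset.sum_range_succ, rem_eq hl hp n (by omega),
      Finset.sum_congr rfl (fun i hi => rem_lt hl hp i (by simp at hi; omega))]
    have : l ≤ p 0 + n := by
      by_cases hz : p (firstSeg l p) = 0
      · rw [plen_spec hp] at hz; omega
      · omega
    omega
  have s4 : pdeg (removeLEdge l (fun j => p (j + firstSeg l p)))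
      ≤ pdeg (fun j => p (j + firstSeg l p)) := by
    rw [pdeg_eq hvt (max M (plen p)) (by omega), pdeg_eq hpt (max M (plen p))
      (by rw [plen_shift hp]; omega)]
    exact Finset.sum_le_sum (fun i _ => (rem_anti hl i hpt).2)
  unfold elen
  omega

/-! ### Beads and component starts -/

/-- bead of row `i` -/
def bd (p : ℕ → ℕ) (i : ℕ) : ℤ := (i : ℤ) - p i

/-- start row of the `m`-th component -/
def cs (l : ℕ) (p : ℕ → ℕ) : ℕ → ℕ
  | 0 => 0
  | m + 1 => cs l p m + firstSeg l (fun j => p (j + cs l p m))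

lemma bd_lt {p : ℕ → ℕ} (hp : IsPartition p) {i j : ℕ} (h : i < j) : bd p i < bd p j := by
  have := hp.1 i j h.le
  unfold bd; omega

lemma bd_le {p : ℕ → ℕ} (hp : IsPartition p) {i j : ℕ} (h : i ≤ j) : bd p i ≤ bd p j := by
  have := hp.1 i j h
  unfold bd; omega

lemma cs_spec {l : ℕ} (hl : 2 ≤ l) {p : ℕ → ℕ} (hp : IsPartition p) (m : ℕ) :
    cs l p m < cs l p (m + 1) ∧ cs l p (m + 1) ≤ cs l p m + l ∧
    bd p (cs l p m) + l ≤ bd p (cs l p (m + 1)) ∧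
    ∀ u, u < cs l p (m + 1) → bd p u < bd p (cs l p m) + l := by
  obtain ⟨a, b, c, d⟩ := firstSeg_spec hl (part_shift hp (cs l p m))
  have e : cs l p (m + 1) = cs l p m + firstSeg l (fun j => p (j + cs l p m)) := rfl
  simp only [zero_add] at c d
  rw [add_comm (firstSeg l _) (cs l p m), ← e] at c
  refine ⟨by omega, by omega, by unfold bd; omega, ?_⟩
  intro u hu
  by_cases h : u < cs l p m
  · have := bd_lt hp h; omega
  · have := d (u - cs l p m) (by omega)
    rw [Nat.sub_add_cancel (by omega)] at this
    unfold bd; omega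

lemma cs_eq {l : ℕ} (hl : 2 ≤ l) {p : ℕ → ℕ} (hp : IsPartition p) (m x : ℕ)
    (h1 : bd p (cs l p m) + l ≤ bd p x)
    (h2 : ∀ u, u < x → bd p u < bd p (cs l p m) + l) : cs l p (m + 1) = x := by
  obtain ⟨a, b, c, d⟩ := cs_spec hl hp m
  rcases lt_trichotomy (cs l p (m + 1)) x with h | h | h
  · have := h2 _ h; omega
  · exact h
  · have := d _ h; omega

lemma cs_tail (l : ℕ) (p : ℕ → ℕ) (m : ℕ) :
    cs l p (m + 1) = cs l (fun j => p (j + firstSeg l p)) m + firstSeg l p := by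
  induction m with
  | zero => simp [cs]
  | succ m ih =>
    have e : cs l p (m + 1 + 1) =
      cs l p (m + 1) + firstSeg l (fun j => p (j + cs l p (m + 1))) := rfl
    rw [e, ih]
    have e2 : cs l (fun j => p (j + firstSeg l p)) (m + 1) =
      cs l (fun j => p (j + firstSeg l p)) m +
        firstSeg l (fun j => p (j + cs l (fun j => p (j + firstSeg l p)) m + firstSeg l p)) := rfl
    rw [e2]
    simp only [← add_assoc]
    omega

lemma bd_tail (l : ℕ) (p : ℕ → ℕ) (m : ℕ) :
    bd p (cs l p (m + 1)) =
      bd (fun j => p (j + firstSeg l p)) (cs l (fun j => p (j + firstSeg l p)) m)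
        + firstSeg l p := by
  rw [cs_tail]; unfold bd; push_cast; ring

lemma cs_mono {l : ℕ} (hl : 2 ≤ l) {p : ℕ → ℕ} (hp : IsPartition p) : StrictMono (cs l p) :=
  strictMono_nat_of_lt_succ (fun m => (cs_spec hl hp m).1)

lemma rem_cs {l : ℕ} (hl : 2 ≤ l) {p : ℕ → ℕ} (hp : IsPartition p) (m : ℕ) (j : ℕ) :
    removeLEdge l p (j + cs l p m) = removeLEdge l (fun j => p (j + cs l p m)) j := by
  induction m generalizing j with
  | zero => simp [cs]
  | succ m ih =>
    have e : cs l p (m + 1) = cs l p m + firstSeg l (fun j => p (j + cs l p m)) := rfl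
    have h1 := rem_add hl (part_shift hp (cs l p m)) j
    have h2 := ih (j + firstSeg l (fun j => p (j + cs l p m)))
    rw [e]
    rw [show j + (cs l p m + firstSeg l (fun j => p (j + cs l p m))) =
      j + firstSeg l (fun j => p (j + cs l p m)) + cs l p m by omega, h2, h1]
    congr 1
    funext i
    congr 1
    omega

lemma cs_zero {l : ℕ} (hl : 2 ≤ l) {p : ℕ → ℕ} (hp : IsPartition p) (h0 : p 0 = 0) (m : ℕ) :
    bd p (cs l p m) = m * l := by
  have hz : ∀ i, p i = 0 := fun i => by have := hp.1 0 i (by omega); omega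
  have h1 : ∀ i, bd p i = i := fun i => by simp [bd, hz]
  rw [h1]
  induction m with
  | zero => simp [cs]
  | succ m ih =>
    rw [cs_eq hl hp m (cs l p m + l) (by rw [h1, h1]; push_cast; omega)
      (fun u hu => by rw [h1, h1]; omega)]
    push_cast
    rw [ih]; ring

lemma mullLen_zero {l : ℕ} {p : ℕ → ℕ} (h0 : p 0 = 0) : mullLen l p = 0 := by
  unfold mullLen; rw [elen_zero h0]; simp

lemma mullLen_lim_aux {l : ℕ} (hl : 2 ≤ l) (n : ℕ) : ∀ p : ℕ → ℕ, IsPartition p → plen p ≤ n →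
    plen p ≤ elen l p ∧
    ∃ N : ℕ, ∀ m, N ≤ m → bd p (cs l p m) = m * l - (mullLen l p : ℤ) := by
  induction n with
  | zero =>
    intro p hp h
    have h0 : p 0 = 0 := (plen_spec hp 0).2 h
    refine ⟨by omega, 0, fun m _ => ?_⟩
    rw [cs_zero hl hp h0, mullLen_zero h0]; simp
  | succ n ih =>
    intro p hp h
    by_cases h0 : p 0 = 0
    · have : plen p ≤ 0 := (plen_spec hp 0).1 h0
      refine ⟨by omega, 0, fun m _ => ?_⟩
      rw [cs_zero hl hp h0, mullLen_zero h0]; simp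
    have hr : plen p ≠ 0 := fun h => h0 ((plen_spec hp 0).2 (by omega))
    obtain ⟨a, b, c, d⟩ := firstSeg_spec hl hp
    have hpt := part_shift hp (firstSeg l p)
    by_cases he : p 0 + plen p - 1 ≤ l
    · have hE := elen_small hl hp h0 he
      have hrh : plen p ≤ firstSeg l p := by
        by_contra h
        have h1 : p (firstSeg l p) ≠ 0 := by
          rw [Ne, plen_spec hp]; omega
        omega
      have hph : p (firstSeg l p) = 0 := (plen_spec hp _).2 hrh
      have key : (firstSeg l p : ℤ) = l - (mullLen l p : ℤ) := by
        unfold mullLen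
        rw [hE]
        by_cases hd : l ∣ p 0 + plen p - 1
        · have h1 := Nat.le_of_dvd (by omega) hd
          rw [if_pos hd]
          have : ¬ plen p < firstSeg l p := by
            intro hlt
            have := d _ hlt
            rw [(plen_spec hp _).2 le_rfl] at this
            omega
          omega
        · rw [if_neg hd]
          have h1 : p 0 + plen p - 1 ≠ l := fun h => hd (by rw [h])
          have : ¬ l + 0 < p 0 + firstSeg l p := by
            intro hlt
            have := d (firstSeg l p - 1) (by omega)
            rw [(plen_spec hp (firstSeg l p - 1)).2 (by omega)] at this
            omega
          omega
      refine ⟨by omega, 1, fun m hm => ?_⟩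
      obtain ⟨m, rfl⟩ := Nat.exists_eq_add_of_le' hm
      rw [bd_tail, cs_zero hl hpt (by simpa using hph), key]
      push_cast; ring
    · obtain ⟨h1, h2⟩ := elen_big hl hp h0 (by omega)
      have hs := plen_shift hp (firstSeg l p)
      obtain ⟨i1, N, hN⟩ := ih _ hpt (by omega)
      refine ⟨by omega, N + 1, fun m hm => ?_⟩
      obtain ⟨m, rfl⟩ := Nat.exists_eq_add_of_le' (show 1 ≤ m by omega)
      rw [bd_tail, hN m (by omega)]
      have key : (mullLen l p : ℤ) =
          mullLen l (fun j => p (j + firstSeg l p)) + l - firstSeg l p := by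
        unfold mullLen
        have hd : l ∣ elen l p ↔ l ∣ elen l (fun j => p (j + firstSeg l p)) := by
          rw [h2]; simp
        by_cases hd2 : l ∣ elen l p
        · rw [if_pos hd2, if_pos (hd.1 hd2)]; omega
        · rw [if_neg hd2, if_neg (fun h => hd2 (hd.2 h))]; omega
      rw [key]; push_cast; ring

lemma mullLen_lim {l : ℕ} (hl : 2 ≤ l) {p : ℕ → ℕ} (hp : IsPartition p) :
    ∃ N : ℕ, ∀ m, N ≤ m → bd p (cs l p m) = m * l - (mullLen l p : ℤ) :=
  (mullLen_lim_aux hl _ p hp le_rfl).2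

lemma plen_le_elen {l : ℕ} (hl : 2 ≤ l) {p : ℕ → ℕ} (hp : IsPartition p) :
    plen p ≤ elen l p := (mullLen_lim_aux hl _ p hp le_rfl).1

lemma rem_mullLen {l : ℕ} (hl : 2 ≤ l) {p : ℕ → ℕ} (hp : IsPartition p) :
    mullLen l (removeLEdge l p) ≤ mullLen l p ∧
      mullLen l p ≤ mullLen l (removeLEdge l p) + l := by
  have hv := rem_part hl hp
  set v := removeLEdge l p with hvd
  have row : ∀ m, v (cs l p (m + 1) - 1) = p (cs l p m) + (cs l p (m + 1) - 1 - cs l p m) - l := by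
    intro m
    have hpt := part_shift hp (cs l p m)
    have hs := firstSeg_spec hl hpt
    have e : cs l p (m + 1) = cs l p m + firstSeg l (fun j => p (j + cs l p m)) := rfl
    have h1 := rem_eq hl hpt (cs l p (m + 1) - 1 - cs l p m) (by omega)
    rw [← rem_cs hl hp m] at h1
    rw [Nat.sub_add_cancel (by omega)] at h1
    simpa using h1
  have F1 : ∀ m, ∃ j, bd v j = bd p (cs l p m) + l := by
    intro m
    obtain ⟨a, b, c, d⟩ := cs_spec hl hp m
    have hr := row m
    by_cases hc : l ≤ p (cs l p m) + (cs l p (m + 1) - 1 - cs l p m)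
    · refine ⟨cs l p (m + 1) - 1, ?_⟩
      unfold bd
      omega
    · refine ⟨cs l p (m + 1), ?_⟩
      have := (rem_anti hl (cs l p (m + 1)) hp).2
      rw [← hvd] at this
      unfold bd at *
      omega
  have F3 : ∀ m u, u < cs l p (m + 1) → bd v u ≤ bd p (cs l p m) + l := by
    intro m u hu
    have h1 := cs_spec hl hp m
    have := bd_le hv (show u ≤ cs l p (m + 1) - 1 by omega)
    have hr := row m
    unfold bd at *
    omega
  have F4 : ∀ m, v (cs l p m) ≤ p (cs l p m) - 1 := by
    intro m
    have := rem_cs hl hp m 0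
    have h2 := rem_zero_le hl (part_shift hp (cs l p m))
    simp only [zero_add] at this h2
    rw [hvd, this]; exact h2
  have low : ∀ m, cs l p m ≤ cs l v m := by
    intro m
    induction m with
    | zero => simp [cs]
    | succ m ih =>
      by_contra hcon
      obtain ⟨a, b, c, d⟩ := cs_spec hl hp m
      obtain ⟨a', b', c', d'⟩ := cs_spec hl hv m
      have h1 := F3 m (cs l v (m + 1)) (by omega)
      have h2 := bd_le hv ih
      have h4 := F4 m
      by_cases hz : p (cs l p m) = 0
      · have z1 : ∀ u, cs l p m ≤ u → v u = 0 := fun u hu => by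
          have := hv.1 _ _ hu; omega
        have z2 := z1 (cs l v m) ih
        have z3 := z1 (cs l v (m + 1)) (by omega)
        unfold bd at *
        omega
      · unfold bd at *
        omega
  have up : ∀ m, bd v (cs l v m) ≤ bd p (cs l p m) + l := by
    intro m
    induction m with
    | zero =>
      obtain ⟨j, hj⟩ := F1 0
      rw [← hj]
      exact bd_le hv (by simp [cs])
    | succ m ih =>
      obtain ⟨j, hj⟩ := F1 (m + 1)
      rw [← hj]
      apply bd_le hv
      by_contra hcon
      obtain ⟨a, b, c, d⟩ := cs_spec hl hp m
      have := (cs_spec hl hv m).2.2.2 j (by omega)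
      omega
  obtain ⟨N, hN⟩ := mullLen_lim hl hp
  obtain ⟨M, hM⟩ := mullLen_lim hl hv
  have h1 := hN (max N M) (le_max_left _ _)
  have h2 := hM (max N M) (le_max_right _ _)
  have h3 := up (max N M)
  have h4 := bd_le hv (low (max N M))
  have h5 := F4 (max N M)
  have h6 : bd p (cs l p (max N M)) ≤ bd v (cs l p (max N M)) := by
    unfold bd; omega
  constructor
  · have : (mullLen l v : ℤ) ≤ mullLen l p := by linarith
    exact_mod_cast this
  · have : (mullLen l p : ℤ) ≤ mullLen l v + l := by linarith
    exact_mod_cast this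

/-! ### Existence of partitions with given edge removal -/

/-- partial construction from row `k` downwards -/
def St (l : ℕ) (v : ℕ → ℕ) (r k : ℕ) : Prop :=
  ∃ q : ℕ → ℕ, IsPartition q ∧ IsLRegular l q ∧ (∀ i, removeLEdge l q i = v (i + k)) ∧
    plen q = r - k ∧ (k ≠ 0 → q 0 ≤ v (k - 1) + 1) ∧
    ∀ j, 1 ≤ j → q j ≠ 0 → j + q 0 < l + q j → q j = v (k + j - 1) + 1

lemma St_step {l : ℕ} (hl : 2 ≤ l) {v : ℕ → ℕ} (hv : IsPartition v) (hvr : IsLRegular l v)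
    {r k : ℕ} (hk : k ≠ 0) (hkr : k ≤ r) (hr : r ≤ plen v + l) (hkv : k < plen v + l)
    (h : St l v r k) : ∃ d, d < k ∧ St l v r d := by
  obtain ⟨q, hq, hqr, hrem, hlen, htop, hinv⟩ := h
  have htop := htop hk
  have hex : ∃ d, k + v d < d + v (k - 1) + l + 1 := ⟨k - 1, by omega⟩
  classical
  obtain ⟨d, hd1, hd2⟩ : ∃ d, k + v d < d + v (k - 1) + l + 1 ∧
      ∀ e, e < d → ¬ (k + v e < e + v (k - 1) + l + 1) :=
    ⟨Nat.find hex, Nat.find_spec hex, fun e he => Nat.find_min hex he⟩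
  have hdk : d < k := by
    by_contra hc
    exact hd2 (k - 1) (by omega) (by omega)
  refine ⟨d, hdk, ?_⟩
  obtain ⟨h, hh⟩ : ∃ h, k = d + h := ⟨k - d, by omega⟩
  obtain ⟨L, hL⟩ : ∃ L : ℕ → ℕ, L = fun i => if i = 0 then v (k - 1) + l + 1 + d - k
    else if i < h then v (d + i - 1) + 1 else q (i - h) := ⟨_, rfl⟩
  have L0 : L 0 = v (k - 1) + l + 1 + d - k := by simp [hL]
  have L1 : ∀ i, i ≠ 0 → i < h → L i = v (d + i - 1) + 1 := by
    intro i h1 h2; rw [hL]; simp only [h1, h2, if_true, if_false]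
  have L2 : ∀ i, h ≤ i → L i = q (i - h) := by
    intro i h1; rw [hL]; simp only [show i ≠ 0 by omega, show ¬ i < h by omega, if_false]
  have hq0 : ∀ j, q j ≤ q 0 := fun j => hq.1 0 j (by omega)
  have Lp : IsPartition L := by
    constructor
    · apply antitone_nat_of_succ_le
      intro n
      by_cases h1 : h ≤ n
      · rw [L2 _ h1, L2 _ (by omega)]; exact hq.1 _ _ (by omega)
      by_cases h2 : n = 0
      · subst h2
        rw [L0]
        by_cases h3 : h = 1
        · rw [L2 _ (by omega)]
          have := hq0 (0 + 1 - h)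
          omega
        · rw [L1 _ (by omega) (by omega)]
          simp only [zero_add, Nat.add_sub_cancel]
          omega
      rw [L1 _ h2 (by omega)]
      by_cases h3 : n + 1 = h
      · rw [L2 _ (by omega)]
        have := hq0 (n + 1 - h)
        have := hv.1 (d + n - 1) (k - 1) (by omega)
        omega
      · rw [L1 _ (by omega) (by omega)]
        have := hv.1 (d + n - 1) (d + (n + 1) - 1) (by omega)
        omega
    · obtain ⟨N, hN⟩ := hq.2
      exact ⟨N + h, fun i hi => by rw [L2 _ (by omega)]; exact hN _ (by omega)⟩
  have hfs : firstSeg l L = h := by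
    apply firstSeg_eq hl Lp
    · rw [L0, L2 h le_rfl, Nat.sub_self]; omega
    · intro g hg
      by_cases h1 : g = 0
      · subst h1; omega
      · rw [L0, L1 g h1 hg]
        have := hv.1 (d + g - 1) (k - 1) (by omega)
        omega
  have htail : (fun j => L (j + h)) = q := by
    funext j; rw [L2 _ (by omega)]; simp
  have hfl := (firstSeg_spec hl Lp).2.1
  rw [hfs] at hfl
  have hLlen : plen L = r - d := by
    apply plen_eq Lp
    · rw [L2 _ (by omega), plen_spec hq]; omega
    · intro i hi
      by_cases h0 : i = 0
      · subst h0; rw [L0]; omega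
      · by_cases h1 : i < h
        · rw [L1 _ h0 h1]; omega
        · rw [L2 _ (by omega), Ne, plen_spec hq]; omega
  have hqh : L h = q 0 := by rw [L2 h le_rfl, Nat.sub_self]
  refine ⟨L, Lp, ?_, ?_, hLlen, ?_, ?_⟩
  · -- regularity
    intro i hi heq
    have hconst : ∀ j, i ≤ j → j ≤ i + l - 1 → L j = L i := by
      intro j h1 h2
      have := Lp.1 _ _ h1
      have := Lp.1 _ _ h2
      omega
    by_cases hih : h ≤ i
    · have := hqr (i - h)
      rw [show i - h + l - 1 = i + l - 1 - h by omega, ← L2 i hih, ← L2 _ (by omega)] at this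
      exact this hi heq
    by_cases h0 : i = 0
    · subst h0
      have hhl : h = l := by
        by_contra hc
        have h1 := hconst h (by omega) (by omega)
        have := (firstSeg_spec hl Lp).2.2.1
        rw [hfs] at this
        omega
      have h1 := hconst 1 (by omega) (by omega)
      rw [L1 1 (by omega) (by omega), L0] at h1
      simp only [Nat.add_sub_cancel] at h1
      have h2 : v (k - 1) = v d := by omega
      by_cases hz : v d = 0
      · rw [plen_spec hv] at hz; omega
      · have := hvr d hz
        rw [show d + l - 1 = k - 1 by omega] at this
        exact this h2
    have e1 := L1 i h0 (by omega)
    have e2 : v (d + i - 1 + l - 1) + 1 = L i := by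
      rcases lt_trichotomy (i + l - 1) h with h1 | h1 | h1
      · have := L1 (i + l - 1) (by omega) h1
        rw [hconst _ (by omega) le_rfl] at this
        rw [this]; congr 2; omega
      · have h2 : L h = L i := by rw [← h1]; exact heq
        have h3 : d + i - 1 + l - 1 = k - 1 := by omega
        rw [h3]
        have := hv.1 (d + i - 1) (k - 1) (by omega)
        omega
      · have h2 : L h = L i := hconst h (by omega) (by omega)
        have h3 := L2 (i + l - 1) (by omega)
        have h4 := hinv (i + l - 1 - h) (by omega) (by omega) (by omega)
        rw [← h3, heq] at h4
        rw [h4]; congr 2; omega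
    have e3 : v (d + i - 1 + l - 1) = v (d + i - 1) := by omega
    by_cases hz : v (d + i - 1) = 0
    · rw [plen_spec hv] at hz
      have h5 : L (i + l - 1) ≠ 0 := by omega
      rw [Ne, plen_spec Lp] at h5
      omega
    · exact hvr _ hz e3
  · intro i
    rw [rem_rec hl Lp, hfs, htail]
    split_ifs with h1 h2
    · rw [L1 _ (by omega) h1, Nat.add_sub_cancel]; congr 1; omega
    · rw [L0, show i + d = k - 1 by omega]; omega
    · rw [hrem]; congr 1; omega
  · intro hd0
    have := hd2 (d - 1) (by omega)
    rw [L0]; omega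
  · intro j h1 h2 h3
    by_cases hj : j < h
    · exact L1 j (by omega) hj
    · exfalso
      have := Lp.1 h j (by omega)
      rw [L0] at h3
      omega

lemma St_zero {l : ℕ} (hl : 2 ≤ l) {v : ℕ → ℕ} (hv : IsPartition v) (hvr : IsLRegular l v)
    {r : ℕ} (hr : r ≤ plen v + l) (k : ℕ) : k ≤ r → k < plen v + l → St l v r k → St l v r 0 := by
  induction k using Nat.strong_induction_on with
  | _ k ih =>
  intro h1 h2 h3
  by_cases hk : k = 0
  · subst hk; exact h3
  · obtain ⟨d, hd, hS⟩ := St_step hl hv hvr hk h1 hr h2 h3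
    exact ih d hd (by omega) (by omega) hS

lemma exists_lift {l : ℕ} (hl : 2 ≤ l) {v : ℕ → ℕ} (hv : IsPartition v) (hvr : IsLRegular l v)
    {r : ℕ} (hr1 : plen v ≤ r) (hr : r ≤ plen v + l) :
    ∃ q, IsPartition q ∧ IsLRegular l q ∧ removeLEdge l q = v ∧ plen q = r := by
  have hS : St l v r 0 := by
    by_cases hc : r < plen v + l
    · apply St_zero hl hv hvr hr r le_rfl hc
      have hz : IsPartition (fun _ : ℕ => 0) := ⟨fun _ _ _ => le_rfl, 0, fun _ _ => rfl⟩
      refine ⟨fun _ => 0, hz, fun i hi => absurd rfl hi, ?_, ?_, by simp, ?_⟩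
      · intro i
        rw [(plen_spec hv _).2 (by omega)]
        have := (rem_anti hl i hz).2
        omega
      · rw [plen_eq hz 0 rfl (by simp)]; omega
      · intro j _ h; exact absurd rfl h
    · apply St_zero hl hv hvr hr (r - 1) (by omega) (by omega)
      have hz : IsPartition (fun i : ℕ => if i = 0 then 1 else 0) := by
        refine ⟨fun i j h => ?_, 1, fun i hi => by simp; omega⟩
        dsimp only
        split_ifs <;> omega
      refine ⟨_, hz, ?_, ?_, ?_, by simp, ?_⟩
      · intro i hi
        by_cases h0 : i = 0
        · subst h0; simp; omega
        · simp [h0] at hi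
      · intro i
        rw [(plen_spec hv _).2 (by omega)]
        have h1 := rem_zero_le hl hz
        have h2 := (rem_part hl hz).1 0 i (by omega)
        simp at h1
        omega
      · rw [plen_eq hz 1 rfl (by intro i hi; simp; omega)]; omega
      · intro j h1 h2
        exfalso
        simp at h2
        omega
  obtain ⟨q, h1, h2, h3, h4, -, -⟩ := hS
  exact ⟨q, h1, h2, funext h3, by omega⟩

lemma mullAux_spec {l : ℕ} (hl : 2 ≤ l) (n : ℕ) : ∀ p : ℕ → ℕ, IsPartition p → IsLRegular l p →
    pdeg p ≤ n → IsPartition (mullAux l n p) ∧ IsLRegular l (mullAux l n p) ∧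
      plen (mullAux l n p) = mullLen l p := by
  have hz : IsPartition (fun _ : ℕ => 0) := ⟨fun _ _ _ => le_rfl, 0, fun _ _ => rfl⟩
  have zcase : ∀ p : ℕ → ℕ, p 0 = 0 → IsPartition (fun _ : ℕ => 0) ∧
      IsLRegular l (fun _ : ℕ => 0) ∧ plen (fun _ : ℕ => 0) = mullLen l p := by
    intro p h0
    refine ⟨hz, fun i hi => absurd rfl hi, ?_⟩
    rw [plen_eq hz 0 rfl (by simp), mullLen_zero h0]
  induction n with
  | zero =>
    intro p hp hr h
    have h0 : p 0 = 0 := by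
      rw [pdeg_eq hp (plen p + 1) (by omega), Finset.sum_range_succ'] at h
      omega
    exact zcase p h0
  | succ n ih =>
    intro p hp hr h
    by_cases h0 : p 0 = 0
    · simp only [mullAux, h0, if_true]
      exact zcase p h0
    have hr0 : plen p ≠ 0 := fun h => h0 ((plen_spec hp 0).2 (by omega))
    have he := plen_le_elen hl hp
    have hdeg : pdeg (removeLEdge l p) ≤ n := by
      unfold elen at he; omega
    obtain ⟨i1, i2, i3⟩ := ih _ (rem_part hl hp) (fun i hi => rem_reg hl i hp hr hi) hdeg
    obtain ⟨m1, m2⟩ := rem_mullLen hl hp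
    have hex := exists_lift hl i1 i2 (r := mullLen l p) (by omega) (by omega)
    simp only [mullAux, h0, if_false]
    have := Classical.epsilon_spec hex
    exact ⟨this.1, this.2.1, this.2.2.2⟩

lemma plen_mull {l : ℕ} (hl : 2 ≤ l) {p : ℕ → ℕ} (hp : IsPartition p) (hr : IsLRegular l p) :
    plen (mull l p) = mullLen l p := (mullAux_spec hl _ p hp hr le_rfl).2.2

/-! ### The main argument -/

lemma conj_spec {p : ℕ → ℕ} (hp : IsPartition p) (j : ℕ) :
    (∀ i, i < conjP p j → j < p i) ∧ p (conjP p j) ≤ j := by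
  classical
  have hex : ∃ u, p u ≤ j := by
    obtain ⟨N, hN⟩ := hp.2
    exact ⟨N, by rw [hN N le_rfl]; omega⟩
  have key : conjP p j = Nat.find hex := by
    unfold conjP
    rw [← Finset.card_range (Nat.find hex)]
    congr 1
    ext i
    simp only [Finset.mem_filter, Finset.mem_range]
    constructor
    · rintro ⟨_, h⟩
      by_contra hc
      have h1 := hp.1 _ _ (not_lt.1 hc)
      have h2 := Nat.find_spec hex
      omega
    · intro h
      have h1 := Nat.find_min hex h
      refine ⟨?_, by omega⟩
      by_contra hc
      have := (plen_spec hp i).2 (by omega)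
      omega
  rw [key]
  refine ⟨fun i hi => ?_, Nat.find_spec hex⟩
  have := Nat.find_min hex hi
  omega

lemma disc_index {l : ℕ} (hl : 2 ≤ l) (n : ℕ) : ∀ p : ℕ → ℕ, IsPartition p →
    ¬ edgeConnAux l n p → ∃ i, (∀ j, j < i → bd p (cs l p (j + 1)) = bd p (cs l p j) + l) ∧
      bd p (cs l p i) + l < bd p (cs l p (i + 1)) ∧ p (cs l p (i + 1)) ≠ 0 := by
  induction n with
  | zero => intro p _ h; exact absurd trivial h
  | succ n ih =>
    intro p hp h
    by_cases he : elen l p ≤ l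
    · simp [edgeConnAux, he] at h
    have h0 : p 0 ≠ 0 := fun h0 => he (by rw [elen_zero h0]; omega)
    have hbig : l < p 0 + plen p - 1 := by
      by_contra hc
      rw [elen_small hl hp h0 (by omega)] at he
      omega
    have hE := (elen_big hl hp h0 hbig).2
    have hph : p (firstSeg l p) ≠ 0 := by
      intro hz
      have : elen l (fun j => p (j + firstSeg l p)) = 0 := elen_zero (by simpa using hz)
      omega
    have hs := firstSeg_spec hl hp
    have c1 : cs l p 1 = firstSeg l p := by simp [cs]
    have c0 : cs l p 0 = 0 := rfl
    by_cases hc : p 0 + firstSeg l p = l + p (firstSeg l p)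
    · simp only [edgeConnAux, he, if_false, hc, true_and] at h
      obtain ⟨i, h1, h2, h3⟩ := ih _ (part_shift hp _) h
      refine ⟨i + 1, ?_, ?_, ?_⟩
      · intro j hj
        cases j with
        | zero => rw [zero_add, c1, c0]; unfold bd; push_cast; omega
        | succ j => rw [bd_tail l p (j + 1), bd_tail l p j, h1 j (by omega)]; ring
      · rw [bd_tail l p (i + 1), bd_tail l p i]; omega
      · rw [cs_tail]; exact h3
    · refine ⟨0, by omega, ?_, ?_⟩
      · rw [zero_add, c1, c0]; unfold bd; push_cast; omega
      · rw [zero_add, c1]; exact hph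

lemma last_min (f : ℕ → ℕ) (i : ℕ) :
    ∃ m, m ≤ i ∧ ∀ m', m' ≤ i → f m ≤ f m' ∧ (m < m' → f m < f m') := by
  induction i with
  | zero => exact ⟨0, le_rfl, fun m' h => by
      have : m' = 0 := by omega
      subst this; exact ⟨le_rfl, fun h => absurd h (lt_irrefl _)⟩⟩
  | succ i ih =>
    obtain ⟨m, hm, h⟩ := ih
    by_cases hc : f (i + 1) ≤ f m
    · refine ⟨i + 1, le_rfl, fun m' hm' => ?_⟩
      by_cases h1 : m' = i + 1
      · subst h1; exact ⟨le_rfl, fun h => absurd h (lt_irrefl _)⟩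
      · have := h m' (by omega)
        exact ⟨by omega, by omega⟩
    · refine ⟨m, by omega, fun m' hm' => ?_⟩
      by_cases h1 : m' = i + 1
      · subst h1; exact ⟨by omega, by omega⟩
      · exact h m' (by omega)

lemma removeNode_part {p : ℕ → ℕ} (hp : IsPartition p) {R : ℕ} (h : p (R + 1) < p R) :
    IsPartition (removeNode p R) := by
  constructor
  · apply antitone_nat_of_succ_le
    intro n
    have := hp.1 n (n + 1) (by omega)
    unfold removeNode
    split_ifs with h1 h2 h2
    · omega
    · subst h1; omega
    · subst h2; omega
    · exact this
  · obtain ⟨N, hN⟩ := hp.2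
    refine ⟨N, fun i hi => ?_⟩
    have := hN i hi
    unfold removeNode
    split_ifs with h1
    · subst h1; omega
    · exact this

lemma locate {l : ℕ} (p : ℕ → ℕ) (m u : ℕ) (h : u < cs l p (m + 1)) :
    ∃ m', m' ≤ m ∧ cs l p m' ≤ u ∧ u < cs l p (m' + 1) := by
  induction m with
  | zero => exact ⟨0, le_rfl, by simp [cs], h⟩
  | succ m ih =>
    by_cases hc : u < cs l p (m + 1)
    · obtain ⟨m', h1, h2⟩ := ih hc
      exact ⟨m', by omega, h2⟩
    · exact ⟨m + 1, le_rfl, by omega, h⟩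

lemma mullLen_congr {l : ℕ} (hl : 2 ≤ l) {p q : ℕ → ℕ} (hp : IsPartition p) (hq : IsPartition q)
    (N : ℕ) (h : ∀ m, N ≤ m → bd q (cs l q m) = bd p (cs l p m)) : mullLen l p = mullLen l q := by
  obtain ⟨N1, h1⟩ := mullLen_lim hl hp
  obtain ⟨N2, h2⟩ := mullLen_lim hl hq
  have a := h1 (max N (max N1 N2)) (by omega)
  have b := h2 (max N (max N1 N2)) (by omega)
  have c := h (max N (max N1 N2)) (by omega)
  have : (mullLen l p : ℤ) = mullLen l q := by linarith
  exact_mod_cast this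

/-- Let `μ` be an `l`-regular partition which is edge `l`-disconnected. Then there is a
co-suitable node `R` of `μ` such that `μ_R` is `l`-regular and
`ℓ(Mull(μ)) = ℓ(Mull(μ_R))`. -/
theorem exists_cosuitable_of_disconnected (l : ℕ) (hl : 2 ≤ l) (p : ℕ → ℕ)
    (hp : IsPartition p) (hreg : IsLRegular l p)
    (hdisc : ¬ EdgeLConnected l p) :
    ∃ i : ℕ, CoSuitable l p i ∧ IsLRegular l (removeNode p i) ∧
      plen (mull l p) = plen (mull l (removeNode p i)) := by
  classical
  obtain ⟨i, hconn, hgap, hnz⟩ := disc_index hl _ p hp hdisc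
  have hmono := cs_mono hl hp
  have hpos : ∀ m, m ≤ i → p (cs l p m) ≠ 0 := by
    intro m hm hz
    have := hp.1 _ _ (hmono (show m < i + 1 by omega)).le
    omega
  -- lengths of the initial constant blocks
  obtain ⟨K, hK⟩ : ∃ K : ℕ → ℕ, ∀ m, m ≤ i → 1 ≤ K m ∧ K m < l ∧
      p (cs l p m + K m) < p (cs l p m) ∧ ∀ t, t < K m → p (cs l p m + t) = p (cs l p m) := by
    have : ∀ m, ∃ k, m ≤ i → 1 ≤ k ∧ k < l ∧
      p (cs l p m + k) < p (cs l p m) ∧ ∀ t, t < k → p (cs l p m + t) = p (cs l p m) := by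
      intro m
      by_cases hm : m ≤ i
      · have h1 := hreg (cs l p m) (hpos m hm)
        have h2 := hp.1 (cs l p m) (cs l p m + l - 1) (by omega)
        have h3 : cs l p m + l - 1 = cs l p m + (l - 1) := by omega
        rw [h3] at h1 h2
        have hex : ∃ k, p (cs l p m + k) < p (cs l p m) := ⟨l - 1, by omega⟩
        refine ⟨Nat.find hex, fun _ => ⟨?_, ?_, Nat.find_spec hex, ?_⟩⟩
        · by_contra hc
          have h4 := Nat.find_spec hex
          rw [show Nat.find hex = 0 by omega] at h4
          simp at h4
        · have := Nat.find_min' hex (show p (cs l p m + (l - 1)) < p (cs l p m) by omega)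
          omega
        · intro t ht
          have h4 := Nat.find_min hex ht
          have h5 := hp.1 (cs l p m) (cs l p m + t) (by omega)
          omega
      · exact ⟨0, fun h => absurd h hm⟩
    choose K hK using this
    exact ⟨K, hK⟩
  obtain ⟨m, hm, hmin⟩ := last_min K i
  obtain ⟨k1, k2, k3, k4⟩ := hK m hm
  obtain ⟨k, hk⟩ : ∃ k, k = K m := ⟨_, rfl⟩
  rw [← hk] at k1 k2 k3 k4
  obtain ⟨R, hR⟩ : ∃ R, R = cs l p m + k - 1 := ⟨_, rfl⟩
  have hpR : p R = p (cs l p m) := by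
    have := k4 (k - 1) (by omega)
    rw [hR, ← this]; congr 1; omega
  have hR1 : p (R + 1) < p R := by
    rw [hpR, show R + 1 = cs l p m + k by omega]; exact k3
  have hpm := hpos m hm
  have hbR : bd p R = bd p (cs l p m) + k - 1 := by unfold bd; omega
  have spec := cs_spec hl hp
  have hRlt : R < cs l p (m + 1) := by
    by_contra hc
    have h1 := (spec m).2.2.1
    have h2 := bd_le hp (show cs l p (m + 1) ≤ R by omega)
    omega
  have hq := removeNode_part hp hR1
  -- congruence of start beads
  have hstart : ∀ j, j ≤ i → bd p (cs l p j) = bd p (cs l p 0) + j * l := by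
    intro j
    induction j with
    | zero => simp
    | succ j ih =>
      intro hj
      rw [hconn j (by omega), ih (by omega)]; push_cast; ring
  have hqreg : IsLRegular l (removeNode p R) := by
    intro a ha heq
    unfold removeNode at ha heq
    by_cases haR : a = R
    · subst haR
      rw [if_pos rfl] at ha heq
      rw [if_neg (by omega)] at heq
      have hrun : ∀ t, 1 ≤ t → t ≤ l - 1 → p (a + t) = p a - 1 := by
        intro t h1 h2
        have e1 := hp.1 (a + 1) (a + t) (by omega)
        have e2 := hp.1 (a + t) (a + l - 1) (by omega)
        omega
      have hrow : p (cs l p m + (l - 1)) = p a - 1 := by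
        rw [← hrun (l - k) (by omega) (by omega)]; congr 1; omega
      have hnext : cs l p (m + 1) = cs l p m + (l - 1) := by
        apply cs_eq hl hp
        · unfold bd; omega
        · intro u hu
          have := bd_le hp (show u ≤ cs l p m + (l - 2) by omega)
          have h2 : p a - 1 ≤ p (cs l p m + (l - 2)) := by
            rw [← hrow]; exact hp.1 _ _ (by omega)
          unfold bd at *
          omega
      have hmi : m < i := by
        rcases Nat.lt_or_ge m i with h | h
        · exact h
        · have : m = i := by omega
          subst this
          rw [hnext] at hgap
          unfold bd at hgap
          omega
      have h6 := (hmin (m + 1) (by omega)).2 (by omega)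
      obtain ⟨q1, q2, q3, q4⟩ := hK (m + 1) (by omega)
      have h7 := q4 k (by omega)
      rw [hnext, hrow] at h7
      have h8 := hreg (a + 1) (by rw [hrun 1 le_rfl (by omega)]; exact ha)
      rw [hrun 1 le_rfl (by omega), show a + 1 + l - 1 = cs l p m + (l - 1) + k by omega] at h8
      exact h8 h7
    · rw [if_neg haR] at ha heq
      by_cases h2 : a + l - 1 = R
      · rw [if_pos h2] at heq
        have := hp.1 a R (by omega)
        omega
      · rw [if_neg h2] at heq
        exact hreg a ha heq
  refine ⟨R, ⟨hR1, ?_, ?_⟩, hqreg, ?_⟩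
  · -- removable in the conjugate
    have hc1 := conj_spec hp (p R - 1)
    have hc2 := conj_spec hp (p R - 1 + 1)
    unfold Removable
    have h1 : conjP p (p R - 1 + 1) ≤ R := by
      by_contra hc
      have := hc2.1 R (by omega)
      omega
    have h2 : R < conjP p (p R - 1) := by
      by_contra hc
      have := hp.1 _ _ (show conjP p (p R - 1) ≤ R by omega)
      omega
    omega
  · intro j hj hadd hres
    have hc1 := conj_spec hp (p R - 1)
    have hcR : conjP p (p R - 1) = R + 1 := by
      have h2 : R < conjP p (p R - 1) := by
        by_contra hc
        have := hp.1 _ _ (show conjP p (p R - 1) ≤ R by omega)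
        omega
      have h3 : ¬ R + 1 < conjP p (p R - 1) := by
        intro hc
        have := hc1.1 _ hc
        omega
      omega
    obtain ⟨hu1, hu2⟩ := conj_spec hp j
    have hlt : conjP p j < conjP p (j - 1) := by
      rcases hadd.2 with h | h
      · omega
      · exact h
    have hpu' := (conj_spec hp (j - 1)).1 _ hlt
    rw [hcR] at hres
    set u := conjP p j with hu
    have hpu : p u = j := by omega
    have huR : u ≤ R := by
      by_contra hc
      have := hu1 R (by omega)
      omega
    obtain ⟨m', hm', ha, hb⟩ := locate (l := l) p m u (by omega)
    have h1 := (spec m').2.2.2 u hb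
    have h2 := bd_le hp ha
    have h3 := hstart m (by omega)
    have h4 := hstart m' (by omega)
    have hdvd : (l : ℤ) ∣ bd p u - (bd p (cs l p m') + k) := by
      have h5 := hres.symm.dvd
      have e : bd p u - (bd p (cs l p m') + k) =
          ((u : ℤ) - j - ((R + 1 : ℕ) - ((p R - 1 : ℕ) : ℤ) - 1)) + ((m : ℤ) - m') * l := by
        have e1 : ((R + 1 : ℕ) : ℤ) - ((p R - 1 : ℕ) : ℤ) - 1 = bd p (cs l p m) + k := by
          rw [Nat.cast_sub (by omega)]
          unfold bd at hbR ⊢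
          push_cast
          linarith
        have e2 : (u : ℤ) - j = bd p u := by unfold bd; rw [hpu]
        rw [e1, e2, h3, h4]; ring
      rw [e]
      exact dvd_add h5 (Dvd.intro_left _ rfl)
    have hz : bd p u - (bd p (cs l p m') + k) = 0 := by
      apply Int.eq_zero_of_abs_lt_dvd hdvd
      rw [abs_lt]; omega
    by_cases hmm : m' = m
    · subst hmm
      have := bd_le hp huR
      omega
    · have h6 := hmin m' (by omega)
      obtain ⟨q1, q2, q3, q4⟩ := hK m' (by omega)
      have h7 := q4 (k - 1) (by omega)
      have h8 : bd p (cs l p m' + (k - 1)) = bd p (cs l p m') + k - 1 := by unfold bd; omega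
      have h9 : u = cs l p m' + k := by
        rcases lt_trichotomy u (cs l p m' + k) with h | h | h
        · have := bd_le hp (show u ≤ cs l p m' + (k - 1) by omega)
          omega
        · exact h
        · have t1 := bd_lt hp h
          have t2 := bd_lt hp (show cs l p m' + (k - 1) < cs l p m' + k by omega)
          omega
      have h10 := hu1 (cs l p m' + (k - 1)) (by omega)
      unfold bd at hz
      omega
  · rw [plen_mull hl hp hreg, plen_mull hl hq hqreg]
    have bq : ∀ u, u ≠ R → bd (removeNode p R) u = bd p u := by
      intro u hu; unfold bd removeNode; rw [if_neg hu]
    have bR : bd (removeNode p R) R = bd p R + 1 := by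
      unfold bd removeNode; rw [if_pos rfl]; omega
    have specm := spec m
    -- far rows agree
    by_cases hk1 : k = 1
    · have hRm : R = cs l p m := by omega
      have before : ∀ j, j ≤ m → cs l (removeNode p R) j = cs l p j := by
        intro j
        induction j with
        | zero => intro _; rfl
        | succ j ih =>
          intro hj
          have ih' := ih (by omega)
          have hlt := hmono (show j < m by omega)
          have hle := hmono.monotone hj
          have sj := spec j
          apply cs_eq hl hq
          · rw [ih', bq _ (by omega)]
            by_cases hc : cs l p (j + 1) = R
            · rw [hc, bR, ← hc]; omega
            · rw [bq _ hc]; omega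
          · intro u hu
            rw [ih', bq _ (by omega), bq _ (by omega)]
            exact sj.2.2.2 u hu
      have mid : ∀ j, m + j ≤ i → bd (removeNode p R) (cs l (removeNode p R) (m + j)) =
          bd p (cs l p (m + j)) + 1 := by
        intro j
        induction j with
        | zero =>
          intro _
          rw [add_zero, before m le_rfl, ← hRm, bR]
        | succ j ih =>
          intro hj
          have ih' := ih (by omega)
          obtain ⟨q1, q2, q3, q4⟩ := hK (m + (j + 1)) hj
          have h6 := (hmin (m + (j + 1)) hj).2 (by omega)
          have h7 := q4 1 (by omega)
          have h8 := hconn (m + j) (by omega)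
          have hgt := hmono (show m < m + (j + 1) by omega)
          have h9 : bd p (cs l p (m + (j + 1)) + 1) = bd p (cs l p (m + (j + 1))) + 1 := by
            unfold bd; push_cast; omega
          have : cs l (removeNode p R) (m + j + 1) = cs l p (m + (j + 1)) + 1 := by
            apply cs_eq hl hq
            · rw [ih', bq _ (by omega), h9]
              rw [← add_assoc]; omega
            · intro u hu
              rw [ih']
              have h10 := bd_le hq (show u ≤ cs l p (m + (j + 1)) by omega)
              rw [bq (cs l p (m + (j + 1))) (by omega)] at h10
              rw [← add_assoc] at h10
              omega
          rw [← add_assoc, this, bq _ (by omega), h9, ← add_assoc]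
      have fin : ∀ j, cs l (removeNode p R) (i + 1 + j) = cs l p (i + 1 + j) := by
        intro j
        induction j with
        | zero =>
          have h1 := mid (i - m) (by omega)
          rw [show m + (i - m) = i by omega] at h1
          have hgt := hmono (show m < i + 1 by omega)
          have si := spec i
          apply cs_eq hl hq
          · rw [add_zero, h1, bq _ (by omega)]; omega
          · intro u hu
            rw [h1]
            rw [add_zero] at hu
            by_cases hc : u = R
            · rw [hc, bR]
              have := si.2.2.2 R (by omega)
              omega
            · rw [bq _ hc]
              have := si.2.2.2 u hu
              omega
        | succ j ih =>
          have sj := spec (i + 1 + j)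
          have hgt := hmono (show m < i + 1 + j by omega)
          rw [← add_assoc]
          apply cs_eq hl hq
          · rw [ih, bq _ (by omega), bq _ (by omega)]; exact sj.2.2.1
          · intro u hu
            rw [ih, bq (cs l p (i + 1 + j)) (by omega)]
            by_cases hc : u = R
            · rw [hc, bR]
              have := bd_lt hp (show R < cs l p (i + 1 + j) by omega)
              omega
            · rw [bq _ hc]; exact sj.2.2.2 u hu
      apply mullLen_congr hl hp hq (i + 1)
      intro j hj
      obtain ⟨j, rfl⟩ := Nat.exists_eq_add_of_le hj
      have hgt := hmono (show m < i + 1 + j by omega)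
      rw [fin, bq _ (by omega)]
    · have hne : ∀ j, cs l p j ≠ R := by
        intro j hj
        rcases Nat.lt_or_ge m j with h | h
        · have := hmono.monotone (show m + 1 ≤ j by omega)
          omega
        · have := hmono.monotone h
          omega
      have all : ∀ j, cs l (removeNode p R) j = cs l p j := by
        intro j
        induction j with
        | zero => rfl
        | succ j ih =>
          have sj := spec j
          apply cs_eq hl hq
          · rw [ih, bq _ (hne _), bq _ (hne _)]; exact sj.2.2.1
          · intro u hu
            rw [ih, bq _ (hne _)]
            by_cases hc : u = R
            · rw [hc] at hu ⊢
              rw [bR]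
              have hmj : m ≤ j := by
                by_contra hcon
                have := hmono.monotone (show j + 1 ≤ m by omega)
                omega
              have := bd_le hp (hmono.monotone hmj)
              omega
            · rw [bq _ hc]; exact sj.2.2.2 u hu
      apply mullLen_congr hl hp hq 0
      intro j _
      rw [all, bq _ (hne _)]

end
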